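/- Let F : ℂ³ → ℂ be the homogeneous quartic F(x,y,z) = (x² + y² − z²)(x² + 2y² − z²), whose projective zero locus is the union of two smooth conics in ℙ²(ℂ) that are tangent to each other at exactly the two points [1:0:1] and [−1:0:1]. Let C ⊆ ℙ²(ℂ) be the set of points [v] with v ∈ ℂ³ \ {0} and F(v) = 0, and let U = ℙ²(ℂ) \ C. Then for every basepoint u ∈ U, the fundamental group π₁(U, u) is isomorphic to the presented group ⟨a, b | (ab)², (ba)²⟩, i.e. the group with presentation ⟨a, b | (ab)² = (ba)² = e⟩. -/

import Mathlib

/-- The quotient topology on the complex projective plane `ℙ²(ℂ)`, i.e. the quotient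
topology induced from `ℂ³ \ {0}` by the projectivization map. -/
instance : TopologicalSpace (Projectivization ℂ (Fin 3 → ℂ)) :=
  inferInstanceAs (TopologicalSpace (Quotient (projectivizationSetoid ℂ (Fin 3 → ℂ))))

/-- The homogeneous quartic whose zero locus is the union of the two tangent conics
`x² + y² = z²` and `x² + 2y² = z²`. -/
noncomputable def F (v : Fin 3 → ℂ) : ℂ :=
  ((v 0) ^ 2 + (v 1) ^ 2 - (v 2) ^ 2) * ((v 0) ^ 2 + 2 * (v 1) ^ 2 - (v 2) ^ 2)

/-- The projective curve `C ⊆ ℙ²(ℂ)` defined by `F = 0`. -/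
noncomputable def C : Set (Projectivization ℂ (Fin 3 → ℂ)) :=
  {p | ∃ (v : Fin 3 → ℂ) (hv : v ≠ 0), F v = 0 ∧ p = Projectivization.mk ℂ v hv}

/-- The complement `U = ℙ²(ℂ) \ C`. -/
noncomputable def U : Set (Projectivization ℂ (Fin 3 → ℂ)) := Cᶜ

/-- The relators `(ab)²` and `(ba)²` of the presentation `⟨a, b | (ab)² = (ba)² = e⟩`. -/
def rels : Set (FreeGroup (Fin 2)) :=
  {(FreeGroup.of 0 * FreeGroup.of 1) ^ 2, (FreeGroup.of 1 * FreeGroup.of 0) ^ 2}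

/-!
The equation of `C` is `q * (q + y²)` with `q = x² + y² - z²`, so on `U` a representative can be
normalized, up to sign, by `q = 1`. This makes `U` the quotient by `w ↦ -w` of the affine quadric
`q = 1` without the points where `y = ± I`. The part `Z` of the quadric where `y` avoids a closed
region joining `± I` is star-shaped in suitable coordinates and still surjects onto `U` by a local
homeomorphism.

Since `Z` is simply connected, `π₁(U)` is generated by the loops obtained from pairs of points of
`Z` with the same image in `U`, and the class of such a loop depends only on the path component of
the pair in `Z ×_U Z`. Besides the diagonal, which gives the trivial class, there are three
components, consisting of the pairs `(w, -w)` with `y` near `0`, above `I`, or below `-I`.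
Exchanging the two points of a pair inverts its class, so the three classes are `δ`, `α`, `α⁻¹` with
`δ² = 1`. There are no further relations: for any group with elements `α` and `δ` such that
`δ² = 1`, gluing along these components gives a principal covering of `U` on which the loops act by
`α` and `δ`. In terms of `a = α` and `b = α⁻¹ * δ` this is the asserted presentation.
-/

open Function Set Topology
open scoped unitInterval

namespace TangentConics

theorem pathClass_induction_of_openCover {Y ι : Type*} [TopologicalSpace Y] {V : ι → Set Y}
    (isOpen : ∀ i, IsOpen (V i)) (cover : ∀ y, ∃ i, y ∈ V i)
    {P : ∀ {x y : Y}, Path.Homotopic.Quotient x y → Prop}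
    (mk : ∀ {x y : Y} (γ : Path x y) (i : ι), range γ ⊆ V i → P (.mk γ))
    (trans : ∀ {x y z : Y} (γ : Path.Homotopic.Quotient x y) (δ : Path.Homotopic.Quotient y z),
      P γ → P δ → P (γ.trans δ))
    {x y : Y} (γ : Path.Homotopic.Quotient x y) : P γ := by
  obtain ⟨γ, rfl⟩ := γ.mk_surjective
  obtain ⟨t, ht₀, ht_mono, ⟨n, ht₁⟩, ht⟩ :=
    exists_monotone_Icc_subset_open_cover_unitInterval (c := fun i ↦ γ ⁻¹' V i)
      (fun i ↦ (isOpen i).preimage γ.continuous) (fun s _ ↦ mem_iUnion.2 (cover (γ s)))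
  have initial (m : ℕ) : P (.mk (γ.subpath 0 (t m))) := by
    induction m with
    | zero =>
      obtain ⟨i, hi⟩ := cover (γ 0)
      rw [ht₀, Path.subpath_self]
      exact mk _ i (by simpa only [Path.refl_range, singleton_subset_iff] using hi)
    | succ m ih =>
      obtain ⟨i, hi⟩ := ht m
      have next : P (.mk (γ.subpath (t m) (t (m + 1)))) := mk _ i <| by
        rw [Path.range_subpath_of_le _ _ _ (ht_mono m.le_succ)]
        exact image_subset_iff.2 hi
      have concat := trans _ _ ih next
      rwa [← Path.Homotopic.Quotient.mk_trans,
        Path.Homotopic.Quotient.eq.2 ⟨Path.Homotopy.subpathTransSubpath γ 0 (t m) (t (m + 1))⟩]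
        at concat
  have whole := initial n
  rw [ht₁ n le_rfl, Path.subpath_zero_one] at whole
  obtain ⟨f, rfl, rfl⟩ := γ
  exact whole

theorem pathClass_symm_trans_cancel_left {Y : Type*} [TopologicalSpace Y] {x y z : Y}
    (γ : Path.Homotopic.Quotient x y) (δ : Path.Homotopic.Quotient y z) :
    γ.symm.trans (γ.trans δ) = δ := by
  rw [← Path.Homotopic.Quotient.trans_assoc, Path.Homotopic.Quotient.symm_trans,
    Path.Homotopic.Quotient.refl_trans]

/-! ### Loops from pairs of points with the same image -/

section Gluing

variable {Y Z : Type*} [TopologicalSpace Y] [TopologicalSpace Z] [SimplyConnectedSpace Z]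
  (φ : C(Z, Y)) (z₀ : Z)

/-- The class in `Y` of the image of a path of `Z` from `z₀` to `z`; such a path is unique up to
homotopy. Its endpoint is allowed to be any `y` equal to `φ z`, so that the classes of two points
of the same fibre have the same type. -/
noncomputable def pathClassTo (z : Z) {y : Y} (h : φ z = y) :
    Path.Homotopic.Quotient (φ z₀) y :=
  (Path.Homotopic.Quotient.map (.mk (PathConnectedSpace.somePath z₀ z)) φ).cast rfl h.symm

theorem pathClassTo_self : pathClassTo φ z₀ z₀ rfl = .refl (φ z₀) := by
  rw [pathClassTo, Path.Homotopic.Quotient.cast_rfl_rfl, Path.Homotopic.Quotient.eq.2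
    (SimplyConnectedSpace.paths_homotopic (PathConnectedSpace.somePath z₀ z₀) (.refl z₀))]
  rfl

variable {z₀} in
theorem pathClassTo_trans_map {z w : Z} (p : Path z w) {x y : Y} (γ : Path x y)
    (lifts : ∀ t, φ (p t) = γ t) (hz : φ z = x) (hw : φ w = y) :
    (pathClassTo φ z₀ z hz).trans (.mk γ) = pathClassTo φ z₀ w hw := by
  subst hz hw
  obtain rfl : γ = p.map φ.continuous := Path.ext (funext fun t ↦ (lifts t).symm)
  simp only [pathClassTo, Path.Homotopic.Quotient.cast_rfl_rfl,
    ← Path.Homotopic.Quotient.mk_map, ← Path.Homotopic.Quotient.mk_trans, ← Path.map_trans]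
  exact Path.Homotopic.Quotient.eq.2 ((SimplyConnectedSpace.paths_homotopic _ _).map φ)

/-- The loop at `φ z₀` obtained from a path class `γ` of `Y` between the images of `z` and `w` by
joining its endpoints to `φ z₀` along images of paths of `Z`. -/
noncomputable def closeUp {x y : Y} (γ : Path.Homotopic.Quotient x y) {z w : Z} (hz : φ z = x)
    (hw : φ w = y) : FundamentalGroup Y (φ z₀) :=
  .fromPath ((pathClassTo φ z₀ z hz).trans (γ.trans (pathClassTo φ z₀ w hw).symm))

theorem closeUp_self (γ : FundamentalGroup Y (φ z₀)) : closeUp φ z₀ γ.toPath rfl rfl = γ := by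
  rw [closeUp, pathClassTo_self, Path.Homotopic.Quotient.refl_trans,
    show (Path.Homotopic.Quotient.refl (φ z₀)).symm = .refl (φ z₀) from rfl,
    Path.Homotopic.Quotient.trans_refl]

theorem closeUp_trans {x y v : Y} (γ : Path.Homotopic.Quotient x y)
    (δ : Path.Homotopic.Quotient y v) {z m w : Z} (hz : φ z = x) (hm : φ m = y) (hw : φ w = v) :
    closeUp φ z₀ (γ.trans δ) hz hw = closeUp φ z₀ δ hm hw * closeUp φ z₀ γ hz hm := by
  simp only [closeUp, FundamentalGroup.mul_def, Path.Homotopic.Quotient.trans_assoc,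
    pathClass_symm_trans_cancel_left, FundamentalGroup.fromPath, FundamentalGroup.fromArrow]

/-- The loop of `Y` that runs from `φ z₀` to the common image of two points of a fibre of `φ` along
the image of a path to the first point, and returns along the image of a path from the second. -/
noncomputable def gluingClass (p : Pullback φ φ) : FundamentalGroup Y (φ z₀) :=
  closeUp φ z₀ (.refl (φ p.1.2)) p.2 rfl

theorem gluingClass_mk {z z' : Z} {y : Y} (h : φ z = y) (h' : φ z' = y) :
    gluingClass φ z₀ ⟨(z, z'), h.trans h'.symm⟩ = closeUp φ z₀ (.refl y) h h' := by
  subst h'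
  rfl

theorem gluingClass_diag (z : Z) : gluingClass φ z₀ ⟨(z, z), rfl⟩ = 1 := by
  rw [gluingClass, closeUp, Path.Homotopic.Quotient.refl_trans]
  exact Path.Homotopic.Quotient.trans_symm _

theorem gluingClass_mul {z z' z'' : Z} (h : φ z = φ z') (h' : φ z' = φ z'') :
    gluingClass φ z₀ ⟨(z', z''), h'⟩ * gluingClass φ z₀ ⟨(z, z'), h⟩ =
      gluingClass φ z₀ ⟨(z, z''), h.trans h'⟩ := by
  rw [gluingClass_mk φ z₀ (h.trans h') rfl, gluingClass_mk φ z₀ h' rfl,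
    gluingClass_mk φ z₀ (h.trans h') h', ← closeUp_trans, Path.Homotopic.Quotient.refl_trans]

theorem closeUp_of_lift {z w z' w' : Z} (p : Path z w) {x y : Y} (γ : Path x y)
    (lifts : ∀ t, φ (p t) = γ t) (hz : φ z = x) (hw : φ w = y) (hz' : φ z' = x) (hw' : φ w' = y) :
    closeUp φ z₀ (.mk γ) hz' hw' = gluingClass φ z₀ ⟨(w, w'), hw.trans hw'.symm⟩ *
      gluingClass φ z₀ ⟨(z', z), hz'.trans hz.symm⟩ := by
  rw [gluingClass_mk φ z₀ hw hw', gluingClass_mk φ z₀ hz' hz]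
  simp only [closeUp, FundamentalGroup.mul_def, Path.Homotopic.Quotient.trans_assoc,
    ← pathClassTo_trans_map φ p γ lifts hz hw, Path.Homotopic.Quotient.refl_trans,
    pathClass_symm_trans_cancel_left, FundamentalGroup.fromPath, FundamentalGroup.fromArrow]

theorem gluingClass_eq_of_joined {p q : Pullback φ φ} (h : Joined p q) :
    gluingClass φ z₀ p = gluingClass φ z₀ q := by
  obtain ⟨γ⟩ := h
  have continuous_fst : Continuous fun r : Pullback φ φ ↦ r.1.1 := by fun_prop
  have continuous_snd : Continuous fun r : Pullback φ φ ↦ r.1.2 := by fun_prop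
  let base := γ.map (φ.continuous.comp continuous_snd)
  have via_fst := closeUp_of_lift φ z₀ (γ.map continuous_fst) base (fun t ↦ (γ t).2)
    p.2 q.2 rfl rfl
  have via_snd := closeUp_of_lift φ z₀ (γ.map continuous_snd) base (fun _ ↦ rfl) rfl rfl rfl rfl
  rw [via_fst, gluingClass_diag, gluingClass_diag, mul_one] at via_snd
  refine mul_right_cancel (b := gluingClass φ z₀ ⟨(p.1.2, p.1.1), p.2.symm⟩) ?_
  rw [via_snd]
  exact (gluingClass_mul φ z₀ p.2.symm p.2).trans (gluingClass_diag φ z₀ _)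

theorem exists_gluingClass_eq {S : Set (Pullback φ φ)} (hS : IsPathConnected S) :
    ∃ c, ∀ p ∈ S, gluingClass φ z₀ p = c := by
  obtain ⟨q, hq⟩ := hS.nonempty
  exact ⟨_, fun p hp ↦ gluingClass_eq_of_joined φ z₀ (hS.joinedIn p hp q hq).joined⟩

theorem closeUp_mem_closure_range_gluingClass (hφ : IsLocalHomeomorph φ) (surj : Surjective φ)
    {x y : Y} (γ : Path.Homotopic.Quotient x y) : ∀ {z w : Z} (hz : φ z = x) (hw : φ w = y),
    closeUp φ z₀ γ hz hw ∈ Subgroup.closure (range (gluingClass φ z₀)) := by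
  induction γ using pathClass_induction_of_openCover
    (fun z ↦ (hφ.localInverseAt z).open_source)
    (fun y ↦ (surj y).imp fun _ ↦ by rintro rfl; exact hφ.apply_self_mem_localInverseAt_source) with
  | @mk x y γ i hγ =>
    intro z w hz hw
    have mem_source (t : I) : γ t ∈ (hφ.localInverseAt i).source := hγ (mem_range_self t)
    have apply_lift (t : I) : φ (hφ.localInverseAt i (γ t)) = γ t :=
      hφ.apply_localInverseAt_of_mem (mem_source t)
    let lift := γ.map' ((hφ.localInverseAt i).continuousOn.mono hγ)
    rw [closeUp_of_lift φ z₀ lift γ apply_lift (by simpa using apply_lift 0)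
      (by simpa using apply_lift 1) hz hw]
    exact mul_mem (Subgroup.subset_closure (mem_range_self _))
      (Subgroup.subset_closure (mem_range_self _))
  | @trans x y v γ δ hγ hδ =>
    intro z w hz hw
    obtain ⟨m, hm⟩ := surj y
    rw [closeUp_trans φ z₀ γ δ hz hm hw]
    exact mul_mem (hδ hm hw) (hγ hz hm)

theorem closure_range_gluingClass (hφ : IsLocalHomeomorph φ) (surj : Surjective φ) :
    Subgroup.closure (range (gluingClass φ z₀)) = ⊤ :=
  eq_top_iff.2 fun γ _ ↦ closeUp_self φ z₀ γ ▸
    closeUp_mem_closure_range_gluingClass φ z₀ hφ surj γ.toPath rfl rfl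

end Gluing

/-! ### Coverings from locally constant cocycles -/

theorem mem_localInverseAt_surjInv_source {Y Z : Type*} [TopologicalSpace Y] [TopologicalSpace Z]
    {φ : Z → Y} (hφ : IsLocalHomeomorph φ) (surj : Surjective φ) (y : Y) :
    y ∈ (hφ.localInverseAt (surjInv surj y)).source := by
  simpa only [surjInv_eq] using hφ.apply_self_mem_localInverseAt_source (x := surjInv surj y)

theorem apply_localInverseAt_surjInv {Y Z : Type*} [TopologicalSpace Y] [TopologicalSpace Z]
    {φ : Z → Y} (hφ : IsLocalHomeomorph φ) (surj : Surjective φ) (y : Y) :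
    φ (hφ.localInverseAt (surjInv surj y) y) = y :=
  hφ.apply_localInverseAt_of_mem (mem_localInverseAt_surjInv_source hφ surj y)

/-- A locally constant `G`-valued cocycle on the fibre product of `φ` with itself: a descent datum
for the trivial principal `G`-bundle on `Z`. Its values at pairs of points in different fibres carry
no information. -/
structure DescentCocycle {Y Z : Type*} [TopologicalSpace Z] (φ : Z → Y) (G : Type*) [Group G] where
  toFun : Z → Z → G
  mul_eq : ∀ {z z' z'' : Z}, φ z = φ z' → φ z' = φ z'' →
    toFun z' z'' * toFun z z' = toFun z z''
  isLocallyConstant : IsLocallyConstant fun p : Pullback φ φ ↦ toFun p.1.1 p.1.2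

namespace DescentCocycle

section Basic

variable {Y Z G : Type*} [TopologicalSpace Z] [Group G] {φ : Z → Y}

instance : CoeFun (DescentCocycle φ G) fun _ ↦ Z → Z → G :=
  ⟨toFun⟩

theorem diag_eq_one (T : DescentCocycle φ G) (z : Z) : T z z = 1 :=
  mul_eq_left.1 (T.mul_eq rfl rfl)

theorem continuousOn_comp [TopologicalSpace G] (T : DescentCocycle φ G) {A : Type*}
    [TopologicalSpace A] {s t : A → Z} {B : Set A} (hs : ContinuousOn s B) (ht : ContinuousOn t B)
    (lifts : ∀ y ∈ B, φ (s y) = φ (t y)) : ContinuousOn (fun y ↦ T (s y) (t y)) B := by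
  rw [continuousOn_iff_continuous_domRestrict] at hs ht ⊢
  exact T.isLocallyConstant.continuous.comp ((hs.prodMk ht).subtype_mk fun y ↦ lifts y y.2)

end Basic

variable {Y Z : Type*} [TopologicalSpace Y] [TopologicalSpace Z] {φ : Z → Y}
  {G : Type*} [Group G] (T : DescentCocycle φ G) [TopologicalSpace G] [DiscreteTopology G]
  (hφ : IsLocalHomeomorph φ) (surj : Surjective φ)

/-- The bundle over `Y` with fibre `G` obtained by gluing trivial bundles along `T`. It is
trivialized over the domains of the chosen local sections of `φ`. -/
noncomputable def bundleCore : FiberBundleCore Z Y G where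
  baseSet z := (hφ.localInverseAt z).source
  isOpen_baseSet z := (hφ.localInverseAt z).open_source
  indexAt := surjInv surj
  mem_baseSet_at := mem_localInverseAt_surjInv_source hφ surj
  coordChange i j y g := T (hφ.localInverseAt i y) (hφ.localInverseAt j y) * g
  coordChange_self i y _ g := by rw [T.diag_eq_one, one_mul]
  coordChange_comp i j k y hy g := by
    have hi := hφ.apply_localInverseAt_of_mem hy.1.1
    have hj := hφ.apply_localInverseAt_of_mem hy.1.2
    have hk := hφ.apply_localInverseAt_of_mem hy.2
    rw [← mul_assoc, T.mul_eq (hi.trans hj.symm) (hj.trans hk.symm)]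
  continuousOn_coordChange i j := by
    have transition : ContinuousOn
        (fun y ↦ T (hφ.localInverseAt i y) (hφ.localInverseAt j y))
        ((hφ.localInverseAt i).source ∩ (hφ.localInverseAt j).source) :=
      T.continuousOn_comp ((hφ.localInverseAt i).continuousOn.mono inter_subset_left)
        ((hφ.localInverseAt j).continuousOn.mono inter_subset_right) fun y hy ↦
          (hφ.apply_localInverseAt_of_mem hy.1).trans (hφ.apply_localInverseAt_of_mem hy.2).symm
    exact (transition.comp continuousOn_fst fun _ hp ↦ hp.1).mul continuousOn_snd

/-- The point of the bundle of `T` represented by the point `g` of the trivial fibre over `z`. -/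
noncomputable def point (z : Z) (g : G) : (T.bundleCore hφ surj).TotalSpace :=
  ⟨φ z, T z (hφ.localInverseAt (surjInv surj (φ z)) (φ z)) * g⟩

theorem point_eq_point {z z' : Z} (h : φ z = φ z') (g : G) :
    T.point hφ surj z g = T.point hφ surj z' (T z z' * g) := by
  have same_base : φ z' = φ (hφ.localInverseAt (surjInv surj (φ z')) (φ z')) :=
    (apply_localInverseAt_surjInv hφ surj (φ z')).symm
  simp only [point, ← mul_assoc, T.mul_eq h same_base]
  exact congrArg (fun y ↦ (⟨y, T z (hφ.localInverseAt (surjInv surj y) y) * g⟩ :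
    (T.bundleCore hφ surj).TotalSpace)) h

theorem localTriv_point {i z : Z} (hz : φ z ∈ (hφ.localInverseAt i).source) (g : G) :
    (T.bundleCore hφ surj).localTriv i (T.point hφ surj z g) =
      (φ z, T z (hφ.localInverseAt i (φ z)) * g) := by
  have hi := hφ.apply_localInverseAt_of_mem hz
  have hσ := apply_localInverseAt_surjInv hφ surj (φ z)
  refine Prod.ext rfl ?_
  rw [← T.mul_eq hσ.symm (hσ.trans hi.symm), mul_assoc]
  rfl

theorem continuous_point (g : G) : Continuous fun z ↦ T.point hφ surj z g := by
  refine continuous_iff_continuousAt.2 fun i ↦ ?_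
  let triv := (T.bundleCore hφ surj).localTriv i
  have nhds : φ ⁻¹' (hφ.localInverseAt i).source ∈ 𝓝 i :=
    ((hφ.localInverseAt i).open_source.preimage hφ.continuous).mem_nhds
      hφ.apply_self_mem_localInverseAt_source
  have section_comp : ContinuousOn (fun z ↦ hφ.localInverseAt i (φ z))
      (φ ⁻¹' (hφ.localInverseAt i).source) :=
    (hφ.localInverseAt i).continuousOn.comp hφ.continuous.continuousOn fun _ hz ↦ hz
  have in_coordinates : ContinuousOn (fun z ↦ (φ z, T z (hφ.localInverseAt i (φ z)) * g))
      (φ ⁻¹' (hφ.localInverseAt i).source) :=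
    hφ.continuous.continuousOn.prodMk <| .mul
      (T.continuousOn_comp continuousOn_id section_comp fun z hz ↦
        (hφ.apply_localInverseAt_of_mem hz).symm) continuousOn_const
  exact (triv.toOpenPartialHomeomorph.continuousAt_iff_continuousAt_comp_left nhds).2
    ((in_coordinates.congr fun z hz ↦ T.localTriv_point hφ surj hz g).continuousAt nhds)

theorem isCoveringMap_proj : IsCoveringMap (T.bundleCore hφ surj).proj :=
  FiberBundle.isCoveringMap

/-- `DescentCocycle.point` as an element of the fibre over any `y` equal to `φ z`, so that the
representatives over two points of the same fibre of `φ` have the same type. -/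
noncomputable def fiberPoint {z : Z} {y : Y} (h : φ z = y) (g : G) :
    (T.bundleCore hφ surj).proj ⁻¹' {y} :=
  ⟨T.point hφ surj z g, h⟩

theorem fiberPoint_eq_fiberPoint {z z' : Z} {y : Y} (h : φ z = y) (h' : φ z' = y) (g : G) :
    T.fiberPoint hφ surj h g = T.fiberPoint hφ surj h' (T z z' * g) :=
  Subtype.ext (T.point_eq_point hφ surj (h.trans h'.symm) g)

theorem fiberPoint_injective {z : Z} {y : Y} (h : φ z = y) :
    Injective (T.fiberPoint hφ surj h) := fun g g' eq ↦ by
  have point_eq : T.point hφ surj z g = T.point hφ surj z g' := congrArg Subtype.val eq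
  exact mul_left_cancel ((Bundle.TotalSpace.mk_inj (F := G)).1 point_eq)

end DescentCocycle

theorem monodromy_symm {E Y : Type*} [TopologicalSpace E] [TopologicalSpace Y] {p : E → Y}
    (cov : IsCoveringMap p) {x y : Y} {γ : Path.Homotopic.Quotient x y} {e : p ⁻¹' {x}}
    {e' : p ⁻¹' {y}} (h : cov.monodromy γ e = e') : cov.monodromy γ.symm e' = e := by
  rw [← h, ← cov.monodromy_trans_apply, Path.Homotopic.Quotient.trans_symm,
    cov.monodromy_refl, id]

section Classification

variable {Y Z : Type*} [TopologicalSpace Y] [TopologicalSpace Z] [SimplyConnectedSpace Z]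
  {φ : C(Z, Y)} {G : Type*} [Group G] (T : DescentCocycle φ G) (z₀ : Z)

section Monodromy

variable [TopologicalSpace G] [DiscreteTopology G] (hφ : IsLocalHomeomorph φ)
  (surj : Surjective φ)

theorem monodromy_pathClassTo {z : Z} {y : Y} (h : φ z = y) (g : G) :
    (T.isCoveringMap_proj hφ surj).monodromy (pathClassTo φ z₀ z h)
      (T.fiberPoint hφ surj rfl g) = T.fiberPoint hφ surj h g := by
  subst h
  exact IsCoveringMap.monodromy_eq_of_map_eq (ex := T.fiberPoint hφ surj rfl g)
    (ey := T.fiberPoint hφ surj rfl g) _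
    (.mk ((PathConnectedSpace.somePath z₀ z).map (T.continuous_point hφ surj g))) rfl

theorem monodromyPerm_gluingClass (p : Pullback φ φ) (g : G) :
    (T.isCoveringMap_proj hφ surj).monodromyPerm _ (gluingClass φ z₀ p)
      (T.fiberPoint hφ surj rfl g) = T.fiberPoint hφ surj rfl (T p.1.1 p.1.2 * g) := by
  rw [IsCoveringMap.coe_monodromyPerm, gluingClass, closeUp, Path.Homotopic.Quotient.refl_trans,
    FundamentalGroup.fromPath, FundamentalGroup.fromArrow, IsCoveringMap.monodromy_trans_apply,
    monodromy_pathClassTo, T.fiberPoint_eq_fiberPoint hφ surj p.2 rfl]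
  exact monodromy_symm _ (monodromy_pathClassTo ..)

variable {z₀} in
theorem monodromyPerm_apply (generate : Subgroup.closure {g | ∃ z z', φ z = φ z' ∧ T z z' = g} = ⊤)
    {ψ : G →* FundamentalGroup Y (φ z₀)}
    (hψ : ∀ p : Pullback φ φ, ψ (T p.1.1 p.1.2) = gluingClass φ z₀ p) (h g : G) :
    (T.isCoveringMap_proj hφ surj).monodromyPerm _ (ψ h) (T.fiberPoint hφ surj rfl g) =
      T.fiberPoint hφ surj rfl (h * g) := by
  induction generate ▸ Subgroup.mem_top h using Subgroup.closure_induction generalizing g with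
  | mem h hh =>
    obtain ⟨z, z', hz, rfl⟩ := hh
    rw [hψ ⟨(z, z'), hz⟩, monodromyPerm_gluingClass]
  | one => rw [map_one, map_one, Equiv.Perm.one_apply, one_mul]
  | mul h k _ _ hh hk => rw [map_mul, map_mul, Equiv.Perm.mul_apply, hk, hh, mul_assoc]
  | inv h _ hh => rw [map_inv, map_inv, Equiv.Perm.inv_eq_iff_eq, hh, mul_inv_cancel_left]

end Monodromy

variable {z₀} in
theorem bijective_of_apply_eq_gluingClass (hφ : IsLocalHomeomorph φ) (surj : Surjective φ)
    (generate : Subgroup.closure {g | ∃ z z', φ z = φ z' ∧ T z z' = g} = ⊤)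
    {ψ : G →* FundamentalGroup Y (φ z₀)}
    (hψ : ∀ p : Pullback φ φ, ψ (T p.1.1 p.1.2) = gluingClass φ z₀ p) : Bijective ψ := by
  let : TopologicalSpace G := ⊥
  have : DiscreteTopology G := ⟨rfl⟩
  constructor
  · refine (injective_iff_map_eq_one ψ).2 fun h hh ↦ ?_
    have fixed := monodromyPerm_apply T hφ surj generate hψ h 1
    rw [hh, map_one, Equiv.Perm.one_apply, mul_one] at fixed
    exact (T.fiberPoint_injective hφ surj rfl fixed).symm
  · rw [← MonoidHom.range_eq_top, eq_top_iff, ← closure_range_gluingClass φ z₀ hφ surj,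
      Subgroup.closure_le]
    rintro _ ⟨p, rfl⟩
    exact ⟨_, hψ p⟩

end Classification

/-! ### The simply connected cover of the complement -/

/-- The quadratic form of the first conic; the quartic is its product with
`quadForm v + v 1 ^ 2`. -/
def quadForm (v : Fin 3 → ℂ) : ℂ :=
  v 0 ^ 2 + v 1 ^ 2 - v 2 ^ 2

theorem F_eq_quadForm_mul (v : Fin 3 → ℂ) : F v = quadForm v * (quadForm v + v 1 ^ 2) := by
  simp only [F, quadForm]
  ring

theorem quadForm_smul (c : ℂ) (v : Fin 3 → ℂ) : quadForm (c • v) = c ^ 2 * quadForm v := by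
  simp only [quadForm, Pi.smul_apply, smul_eq_mul]
  ring

theorem F_smul (c : ℂ) (v : Fin 3 → ℂ) : F (c • v) = c ^ 4 * F v := by
  simp only [F_eq_quadForm_mul, quadForm_smul, Pi.smul_apply, smul_eq_mul]
  ring

theorem continuous_quadForm : Continuous quadForm := by
  unfold quadForm
  fun_prop

theorem mk_mem_U_iff {v : Fin 3 → ℂ} (hv : v ≠ 0) : Projectivization.mk ℂ v hv ∈ U ↔ F v ≠ 0 := by
  refine not_congr ⟨?_, fun h ↦ ⟨v, hv, h, rfl⟩⟩
  rintro ⟨w, hw, hFw, h⟩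
  obtain ⟨c, rfl⟩ := (Projectivization.mk_eq_mk_iff' ℂ _ _ hv hw).1 h
  rw [F_smul, hFw, mul_zero]

/-- The complex plane cut along the segment joining the branch points `±I` through the closed region
`1 + re y ≤ |im y| ≤ 1 - re y`. -/
def cutPlane : Set ℂ :=
  {y | |y.im| < 1 + y.re ∨ 1 - y.re < |y.im|}

theorem isOpen_cutPlane : IsOpen cutPlane :=
  .union (isOpen_lt (f := fun y : ℂ ↦ |y.im|) (g := fun y ↦ 1 + y.re) (by fun_prop) (by fun_prop))
    (isOpen_lt (f := fun y : ℂ ↦ 1 - y.re) (g := fun y ↦ |y.im|) (by fun_prop) (by fun_prop))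

theorem starConvex_cutPlane : StarConvex ℝ 1 cutPlane := by
  intro y hy s t hs ht hst
  obtain rfl : s = 1 - t := by linarith
  simp only [cutPlane, mem_ofPred_eq, Complex.add_re, Complex.add_im, Complex.smul_re,
    Complex.smul_im, Complex.one_re, Complex.one_im, smul_eq_mul, mul_zero, zero_add, abs_mul,
    abs_of_nonneg ht] at hy ⊢
  rcases ht.eq_or_lt with rfl | ht
  · norm_num
  · exact hy.imp (fun hy ↦ by nlinarith) (fun hy ↦ by nlinarith)

theorem neg_one_notMem_cutPlane : (-1 : ℂ) ∉ cutPlane := by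
  norm_num [cutPlane]

theorem mem_or_neg_mem_cutPlane {y : ℂ} (hy : y ^ 2 + 1 ≠ 0) :
    y ∈ cutPlane ∨ -y ∈ cutPlane := by
  contrapose! hy
  simp only [cutPlane, mem_ofPred_eq, not_or, not_lt, Complex.neg_re, Complex.neg_im, abs_neg] at hy
  have re_eq : y.re = 0 := by linarith
  have abs_im : |y.im| = 1 := by linarith
  have im_sq : y.im ^ 2 = 1 := by rw [← sq_abs, abs_im, one_pow]
  rw [← Complex.re_add_im y, re_eq, Complex.ofReal_zero, zero_add, mul_pow, Complex.I_sq,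
    ← Complex.ofReal_pow, im_sq]
  norm_num

theorem sq_add_one_ne_zero_of_mem_cutPlane {y : ℂ} (hy : y ∈ cutPlane) : y ^ 2 + 1 ≠ 0 := by
  intro h
  have factored : (y - Complex.I) * (y + Complex.I) = 0 := by
    linear_combination h - Complex.I_sq
  rcases mul_eq_zero.1 factored with h | h
  · obtain rfl := sub_eq_zero.1 h
    norm_num [cutPlane] at hy
  · obtain rfl := eq_neg_of_add_eq_zero_left h
    norm_num [cutPlane] at hy

/-- The component of `cutPlane ∩ -cutPlane` that contains `0`. -/
def diamond : Set ℂ :=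
  {y | |y.re| + |y.im| < 1}

/-- The component of `cutPlane ∩ -cutPlane` above the branch point `I`. The third component is
`-upperCone`. -/
def upperCone : Set ℂ :=
  {y | 1 + |y.re| < y.im}

theorem isOpen_diamond : IsOpen diamond :=
  isOpen_lt (by fun_prop) (by fun_prop)

theorem isOpen_upperCone : IsOpen upperCone :=
  isOpen_lt (by fun_prop) (by fun_prop)

theorem neg_diamond : -diamond = diamond := by
  ext y
  simp only [diamond, Set.mem_neg, mem_ofPred_eq, Complex.neg_re, Complex.neg_im, abs_neg]

theorem convexOn_abs_re : ConvexOn ℝ univ fun y : ℂ ↦ |y.re| :=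
  (convexOn_norm convex_univ).comp_linearMap Complex.reLm

theorem convex_diamond : Convex ℝ diamond := by
  have convexOn_abs_im : ConvexOn ℝ univ fun y : ℂ ↦ |y.im| :=
    (convexOn_norm convex_univ).comp_linearMap Complex.imLm
  simpa only [diamond, mem_univ, true_and, Pi.add_apply] using
    (convexOn_abs_re.add convexOn_abs_im).convex_lt 1

theorem convex_upperCone : Convex ℝ upperCone := by
  have concaveOn_im : ConcaveOn ℝ univ fun y : ℂ ↦ y.im := Complex.imLm.concaveOn convex_univ
  have lt_iff (y : ℂ) : 1 + |y.re| < y.im ↔ |y.re| - y.im < -1 := by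
    constructor <;> intro h <;> linarith
  simpa only [upperCone, lt_iff, mem_univ, true_and, Pi.sub_apply] using
    (convexOn_abs_re.sub concaveOn_im).convex_lt (-1)

theorem isPathConnected_diamond : IsPathConnected diamond :=
  convex_diamond.isPathConnected ⟨0, by norm_num [diamond]⟩

theorem isPathConnected_upperCone : IsPathConnected upperCone :=
  convex_upperCone.isPathConnected ⟨2 * Complex.I, by norm_num [upperCone]⟩

theorem mem_cutPlane_and_neg_mem_cutPlane_iff {y : ℂ} : y ∈ cutPlane ∧ -y ∈ cutPlane ↔
    y ∈ diamond ∨ y ∈ upperCone ∨ -y ∈ upperCone := by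
  simp only [cutPlane, diamond, upperCone, mem_ofPred_eq, Complex.neg_re, Complex.neg_im, abs_neg]
  grind

theorem disjoint_diamond_upperCone : Disjoint diamond upperCone := by
  refine disjoint_left.2 fun y hy hy' ↦ ?_
  simp only [diamond, upperCone, mem_ofPred_eq] at hy hy'
  grind

theorem neg_notMem_upperCone {y : ℂ} (hy : y ∈ upperCone) : -y ∉ upperCone := by
  simp only [upperCone, mem_ofPred_eq, Complex.neg_re, Complex.neg_im, abs_neg] at hy ⊢
  grind

/-- The part over `cutPlane` of the affine quadric `quadForm w = 1`. The quadric without the points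
where `w 1 = ± I` is a double cover of `U`; the deck transformation is `w ↦ -w`. -/
def cutQuadric : Set (Fin 3 → ℂ) :=
  {w | quadForm w = 1 ∧ w 1 ∈ cutPlane}

theorem ne_zero_of_mem_cutQuadric {w : Fin 3 → ℂ} (hw : w ∈ cutQuadric) : w ≠ 0 := by
  rintro rfl
  simpa [quadForm] using hw.1

theorem F_ne_zero_of_mem_cutQuadric {w : Fin 3 → ℂ} (hw : w ∈ cutQuadric) : F w ≠ 0 := by
  rw [F_eq_quadForm_mul, hw.1, one_mul, add_comm]
  exact sq_add_one_ne_zero_of_mem_cutPlane hw.2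

theorem mul_eq_one_sub_sq {w : Fin 3 → ℂ} (hw : quadForm w = 1) :
    (w 0 - w 2) * (w 0 + w 2) = 1 - w 1 ^ 2 := by
  linear_combination (norm := (simp only [quadForm]; ring)) hw

/-- The point of the quadric `quadForm w = 1` with the given values of the isotropic coordinates
`w 0 - w 2` and `w 0 + w 2` and of `w 1`. -/
noncomputable def ofIsotropic (u v y : ℂ) : Fin 3 → ℂ :=
  ![(v + u) / 2, y, (v - u) / 2]

theorem ofIsotropic_sub_add (w : Fin 3 → ℂ) :
    ofIsotropic (w 0 - w 2) (w 0 + w 2) (w 1) = w := by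
  ext i
  fin_cases i <;> simp [ofIsotropic]

theorem quadForm_ofIsotropic (u v y : ℂ) : quadForm (ofIsotropic u v y) = u * v + y ^ 2 := by
  simp only [quadForm, ofIsotropic, Matrix.cons_val_zero, Matrix.cons_val_one, Matrix.cons_val]
  ring

theorem one_add_ne_zero {y : ℂ} (hy : y ∈ cutPlane) : 1 + y ≠ 0 := fun h ↦
  neg_one_notMem_cutPlane (eq_neg_of_add_eq_zero_right h ▸ hy)

theorem one_sub_mul_div {w : Fin 3 → ℂ} (hw : w ∈ cutQuadric) :
    1 - (w 0 - w 2) * ((w 0 + w 2) / (1 + w 1)) = w 1 := by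
  rw [← mul_div_assoc, mul_eq_one_sub_sq hw.1, sub_eq_iff_eq_add, ← sub_eq_iff_eq_add',
    eq_div_iff (one_add_ne_zero hw.2)]
  ring

/-- Coordinates on `cutQuadric` in which it is star-shaped. The formula solves the equation
`(w 0 - w 2) * (w 0 + w 2) = (1 - w 1) * (1 + w 1)` of the quadric. -/
noncomputable def cutQuadricHomeomorph :
    cutQuadric ≃ₜ {p : ℂ × ℂ | 1 - p.1 * p.2 ∈ cutPlane} where
  toFun w := ⟨(w.1 0 - w.1 2, (w.1 0 + w.1 2) / (1 + w.1 1)), by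
    simpa only [mem_ofPred_eq, one_sub_mul_div w.2] using w.2.2⟩
  invFun p := ⟨ofIsotropic p.1.1 (p.1.2 * (2 - p.1.1 * p.1.2)) (1 - p.1.1 * p.1.2), by
    refine ⟨?_, p.2⟩
    rw [quadForm_ofIsotropic]
    ring⟩
  left_inv w := by
    have h := one_sub_mul_div w.2
    have h' : (2 : ℂ) - (w.1 0 - w.1 2) * ((w.1 0 + w.1 2) / (1 + w.1 1)) = 1 + w.1 1 := by
      linear_combination h
    simp only [h, h', div_mul_cancel₀ _ (one_add_ne_zero w.2.2), ofIsotropic_sub_add]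
  right_inv p := by
    have h := one_add_ne_zero p.2
    ext
    · simp only [ofIsotropic, mem_ofPred_eq, Matrix.cons_val_zero, Matrix.cons_val]
      ring
    · simp only [ofIsotropic, mem_ofPred_eq, Matrix.cons_val_zero, Matrix.cons_val,
        Matrix.cons_val_one]
      rw [div_eq_iff h]
      ring
  continuous_toFun := by
    have continuous_coord (i : Fin 3) : Continuous fun w : cutQuadric ↦ w.1 i :=
      (continuous_apply i).comp continuous_subtype_val
    exact .subtype_mk (.prodMk (.sub (continuous_coord 0) (continuous_coord 2)) <|
      .div₀ (.add (continuous_coord 0) (continuous_coord 2))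
        (.add continuous_const (continuous_coord 1)) fun w ↦ one_add_ne_zero w.2.2) _
  continuous_invFun := by
    unfold ofIsotropic
    fun_prop

theorem starConvex_cutQuadric_coordinates :
    StarConvex ℝ 0 {p : ℂ × ℂ | 1 - p.1 * p.2 ∈ cutPlane} := by
  refine starConvex_zero_iff.2 fun p hp t ht₀ ht₁ ↦ ?_
  have h := starConvex_cutPlane hp (a := 1 - t ^ 2) (b := t ^ 2) (by nlinarith) (by positivity)
    (by ring)
  simp only [mem_ofPred_eq]
  convert h using 1
  simp only [Prod.smul_fst, Prod.smul_snd, Complex.real_smul, Complex.ofReal_sub,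
    Complex.ofReal_one, Complex.ofReal_pow, mul_one]
  ring

instance : SimplyConnectedSpace cutQuadric :=
  have := starConvex_cutQuadric_coordinates.contractibleSpace ⟨0, by norm_num [cutPlane]⟩
  have := cutQuadricHomeomorph.contractibleSpace
  inferInstance

theorem exists_continuousAt_root {n : ℕ} (hn : n ≠ 0) {c : ℂ} (hc : c ≠ 0) :
    ∃ s : ℂ → ℂ, (∀ z, s z ^ n = z) ∧ s (c ^ n) = c ∧ ContinuousAt s (c ^ n) := by
  have base_eq_one : c ^ n / c ^ n = 1 := div_self (pow_ne_zero n hc)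
  refine ⟨fun z ↦ c * (z / c ^ n) ^ ((n : ℂ)⁻¹), fun z ↦ ?_, ?_, ?_⟩
  · rw [mul_pow, Complex.cpow_nat_inv_pow _ hn, mul_div_cancel₀ _ (pow_ne_zero n hc)]
  · simp only [base_eq_one, Complex.one_cpow, mul_one]
  · refine continuousAt_const.mul (.cpow (continuousAt_id.div_const _) continuousAt_const ?_)
    exact base_eq_one ▸ Complex.one_mem_slitPlane

/-- The restriction to `cutQuadric` of the double cover of `U` by an affine quadric. -/
noncomputable def cutProj : C(cutQuadric, U) where
  toFun w := ⟨Projectivization.mk ℂ w.1 (ne_zero_of_mem_cutQuadric w.2),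
    (mk_mem_U_iff _).2 (F_ne_zero_of_mem_cutQuadric w.2)⟩
  continuous_toFun := .subtype_mk (continuous_quotient_mk'.comp
    (.subtype_mk continuous_subtype_val fun w ↦ ne_zero_of_mem_cutQuadric w.2)) _

theorem cutProj_eq_iff {w w' : cutQuadric} :
    cutProj w = cutProj w' ↔ w' = w ∨ w'.1 = -w.1 := by
  refine Subtype.ext_iff.trans ((Projectivization.mk_eq_mk_iff' ..).trans ⟨?_, ?_⟩)
  · rintro ⟨c, hc⟩
    have c_sq : c ^ 2 = 1 := by
      simpa [← hc, quadForm_smul, w'.2.1] using w.2.1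
    rcases sq_eq_one_iff.1 c_sq with rfl | rfl
    · exact .inl (Subtype.ext (by rw [← hc, one_smul]))
    · exact .inr (by rw [← hc, neg_one_smul, neg_neg])
  · rintro (rfl | h)
    · exact ⟨1, one_smul ..⟩
    · exact ⟨-1, by rw [h, neg_one_smul, neg_neg]⟩

theorem fst_eq_snd_iff (p : Pullback cutProj cutProj) : p.1.1 = p.1.2 ↔ p.1.2.1 ≠ -p.1.1.1 := by
  refine ⟨fun h ↦ ?_, fun h ↦ ((cutProj_eq_iff.1 p.2).resolve_right h).symm⟩
  rw [← h]
  exact self_ne_neg.2 (ne_zero_of_mem_cutQuadric p.1.1.2)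

theorem surjective_cutProj : Surjective cutProj := by
  rintro ⟨p, hp⟩
  induction p with | h v hv
  have quadForm_ne_zero : quadForm v ≠ 0 :=
    left_ne_zero_of_mul (F_eq_quadForm_mul v ▸ (mk_mem_U_iff hv).1 hp)
  obtain ⟨c, c_sq⟩ := IsAlgClosed.exists_pow_nat_eq (quadForm v) two_pos
  have hc : c ≠ 0 := by
    rintro rfl
    exact quadForm_ne_zero (by rw [← c_sq, zero_pow two_ne_zero])
  obtain ⟨w, rfl⟩ : ∃ w, c • w = v := ⟨c⁻¹ • v, smul_inv_smul₀ hc v⟩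
  have quadForm_eq_one : quadForm w = 1 :=
    mul_left_cancel₀ (pow_ne_zero 2 hc) (by rw [← quadForm_smul, ← c_sq, mul_one])
  have not_branch : w 1 ^ 2 + 1 ≠ 0 := by
    have := right_ne_zero_of_mul (F_smul c w ▸ (mk_mem_U_iff hv).1 hp)
    rwa [F_eq_quadForm_mul, quadForm_eq_one, one_mul, add_comm] at this
  rcases mem_or_neg_mem_cutPlane not_branch with h | h
  · exact ⟨⟨w, quadForm_eq_one, h⟩, Subtype.ext <|
      (Projectivization.mk_eq_mk_iff' ..).2 ⟨c⁻¹, inv_smul_smul₀ hc w⟩⟩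
  · exact ⟨⟨-w, by simpa [quadForm] using quadForm_eq_one, h⟩, Subtype.ext <|
      (Projectivization.mk_eq_mk_iff' ..).2 ⟨-c⁻¹, by rw [neg_smul, inv_smul_smul₀ hc]⟩⟩

theorem isOpen_cone {W : Set (Fin 3 → ℂ)} (hW : IsOpen W) :
    IsOpen {v | ∃ c : ℂ, c ≠ 0 ∧ ∃ w ∈ W, quadForm w = 1 ∧ c • w = v} := by
  refine isOpen_iff_mem_nhds.2 ?_
  rintro _ ⟨c, hc, w, hw, hqw, rfl⟩
  obtain ⟨s, s_sq, s_base, hs⟩ := exists_continuousAt_root two_ne_zero hc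
  have quadForm_base : quadForm (c • w) = c ^ 2 := by rw [quadForm_smul, hqw, mul_one]
  rw [← quadForm_base] at hs s_base
  have continuousAt_root : ContinuousAt (fun v ↦ s (quadForm v)) (c • w) :=
    hs.comp continuous_quadForm.continuousAt
  have normalized_mem : ∀ᶠ v in 𝓝 (c • w), (s (quadForm v))⁻¹ • v ∈ W := by
    refine ((continuousAt_root.inv₀ (by rwa [s_base])).smul continuousAt_id).preimage_mem_nhds
      (hW.mem_nhds ?_)
    rwa [Pi.smul_apply', Pi.inv_apply, s_base, id, inv_smul_smul₀ hc]
  filter_upwards [normalized_mem, continuousAt_root.eventually_ne (s_base ▸ hc)] with v hv hv₀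
  have quadForm_ne_zero : quadForm v ≠ 0 := s_sq (quadForm v) ▸ pow_ne_zero 2 hv₀
  refine ⟨s (quadForm v), hv₀, _, hv, ?_, smul_inv_smul₀ hv₀ v⟩
  rw [quadForm_smul, inv_pow, s_sq, inv_mul_cancel₀ quadForm_ne_zero]

theorem isOpenMap_cutProj : IsOpenMap cutProj := by
  intro V hV
  obtain ⟨V', hV', rfl⟩ := isOpen_induced_iff.1 hV
  have isOpen_image : IsOpen (Subtype.val '' (cutProj '' (Subtype.val ⁻¹' V'))) := by
    refine isQuotientMap_quotient_mk'.isOpen_preimage.1 ?_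
    convert (isOpen_cone (hV'.inter (isOpen_cutPlane.preimage (continuous_apply 1)))).preimage
      continuous_subtype_val
    ext ⟨v, hv⟩
    constructor
    · rintro ⟨_, ⟨w, hwV, rfl⟩, hw⟩
      obtain ⟨c, hc⟩ := (Projectivization.mk_eq_mk_iff ..).1 hw.symm
      exact ⟨c, c.ne_zero, w, ⟨hwV, w.2.2⟩, w.2.1, hc⟩
    · rintro ⟨c, hc, w, ⟨hwV, hw⟩, hqw, hv⟩
      exact ⟨_, ⟨⟨w, hqw, hw⟩, hwV, rfl⟩,
        .symm <| (Projectivization.mk_eq_mk_iff ..).2 ⟨Units.mk0 c hc, hv⟩⟩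
  exact isOpen_induced_iff.2 ⟨_, isOpen_image, preimage_image_eq _ Subtype.val_injective⟩

theorem isOpen_pullbackDiagonal_cutProj : IsOpen (Function.pullbackDiagonal cutProj) := by
  have isClosed_antipodal : IsClosed {p : Pullback cutProj cutProj | p.1.2.1 = -p.1.1.1} :=
    isClosed_eq (by fun_prop) (by fun_prop)
  convert isClosed_antipodal.isOpen_compl using 1
  ext p
  exact fst_eq_snd_iff p

theorem isLocalHomeomorph_cutProj : IsLocalHomeomorph cutProj := by
  refine isLocalHomeomorph_iff_isOpenEmbedding_restrict.2 fun w ↦ ?_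
  obtain ⟨V, isOpen, mem, injOn⟩ :=
    isLocallyInjective_iff_isOpen_diagonal.2 isOpen_pullbackDiagonal_cutProj w
  exact ⟨V, isOpen.mem_nhds mem, .of_continuous_injective_isOpenMap
    (cutProj.continuous.comp continuous_subtype_val) (injOn_iff_injective.1 injOn)
    (isOpenMap_cutProj.domRestrict isOpen)⟩

/-! ### Pairs of antipodal points -/

/-- The pairs of antipodal points of `cutQuadric` at which the middle coordinate of the first one
lies in `K`. -/
def antipodalPairs (K : Set ℂ) : Set (Pullback cutProj cutProj) :=
  {p | p.1.2.1 = -p.1.1.1 ∧ p.1.1.1 1 ∈ K}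

theorem swap_mem_antipodalPairs {K : Set ℂ} {p : Pullback cutProj cutProj}
    (hp : p ∈ antipodalPairs K) :
    (⟨(p.1.2, p.1.1), p.2.symm⟩ : Pullback cutProj cutProj) ∈ antipodalPairs (-K) := by
  refine ⟨by rw [hp.1, neg_neg], ?_⟩
  rw [Set.mem_neg, ← Pi.neg_apply, hp.1, neg_neg]
  exact hp.2

theorem mem_antipodalPairs_of_ne {p : Pullback cutProj cutProj} (hp : p.1.1 ≠ p.1.2) :
    p ∈ antipodalPairs diamond ∨ p ∈ antipodalPairs upperCone ∨
      p ∈ antipodalPairs (-upperCone) := by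
  have antipodal := (cutProj_eq_iff.1 p.2).resolve_left hp.symm
  have neg_mem : -p.1.1.1 1 ∈ cutPlane := by
    rw [← Pi.neg_apply, ← antipodal]
    exact p.1.2.2.2
  exact (mem_cutPlane_and_neg_mem_cutPlane_iff.1 ⟨p.1.1.2.2, neg_mem⟩).imp
    (⟨antipodal, ·⟩) (.imp (⟨antipodal, ·⟩) (⟨antipodal, ·⟩))

theorem isOpen_antipodalPairs {K : Set ℂ} (hK : IsOpen K) : IsOpen (antipodalPairs K) := by
  have isOpen_antipodal : IsOpen {p : Pullback cutProj cutProj | p.1.2.1 = -p.1.1.1} := by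
    have isClosed_diag : IsClosed {p : Pullback cutProj cutProj | p.1.1 = p.1.2} :=
      isClosed_eq (by fun_prop) (by fun_prop)
    convert isClosed_diag.isOpen_compl using 1
    ext p
    exact not_iff_not.1 (not_not.trans (fst_eq_snd_iff p)).symm
  have continuous_middle : Continuous fun p : Pullback cutProj cutProj ↦ p.1.1.1 1 :=
    (continuous_apply 1).comp (by fun_prop)
  exact isOpen_antipodal.inter (hK.preimage continuous_middle)

theorem isPathConnected_quadForm_eq_one {K : Set ℂ} (hK : IsPathConnected K)
    (sq_ne_one : ∀ y ∈ K, y ^ 2 ≠ 1) : IsPathConnected {w | quadForm w = 1 ∧ w 1 ∈ K} := by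
  let param (q : ℂ × ℂ) : Fin 3 → ℂ := ofIsotropic q.1 ((1 - q.2 ^ 2) / q.1) q.2
  have continuousOn_param : ContinuousOn param ({0}ᶜ ×ˢ K) := by
    have (q : ℂ × ℂ) (hq : q ∈ {0}ᶜ ×ˢ K) : q.1 ≠ 0 := hq.1
    unfold param ofIsotropic
    fun_prop (disch := assumption)
  convert ((isPathConnected_compl_singleton_of_one_lt_rank (by simp) (0 : ℂ)).prod hK).image'
    continuousOn_param
  refine Subset.antisymm (fun w hw ↦ ?_) ?_
  · have product := mul_eq_one_sub_sq hw.1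
    have ne_zero : w 0 - w 2 ≠ 0 :=
      left_ne_zero_of_mul (product ▸ sub_ne_zero.2 (sq_ne_one _ hw.2).symm)
    refine ⟨(w 0 - w 2, w 1), ⟨ne_zero, hw.2⟩, ?_⟩
    simp only [param, ← product, mul_div_cancel_left₀ _ ne_zero, ofIsotropic_sub_add]
  · rintro _ ⟨q, hq, rfl⟩
    refine ⟨?_, hq.2⟩
    rw [quadForm_ofIsotropic, mul_div_cancel₀ _ hq.1, sub_add_cancel]

theorem isPathConnected_antipodalPairs {K : Set ℂ} (hK : IsPathConnected K)
    (subset : ∀ y ∈ K, y ∈ cutPlane ∧ -y ∈ cutPlane) : IsPathConnected (antipodalPairs K) := by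
  have : PathConnectedSpace {w | quadForm w = 1 ∧ w 1 ∈ K} :=
    isPathConnected_iff_pathConnectedSpace.1 <| isPathConnected_quadForm_eq_one hK fun y hy h ↦ by
      rcases sq_eq_one_iff.1 h with rfl | rfl
      · exact neg_one_notMem_cutPlane (subset _ hy).2
      · exact neg_one_notMem_cutPlane (subset _ hy).1
  let pair (w : {w | quadForm w = 1 ∧ w 1 ∈ K}) : Pullback cutProj cutProj :=
    ⟨(⟨w, w.2.1, (subset _ w.2.2).1⟩,
      ⟨-w, by simpa [quadForm] using w.2.1, (subset _ w.2.2).2⟩), cutProj_eq_iff.2 (.inr rfl)⟩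
  have continuous_pair : Continuous pair := by
    unfold pair
    fun_prop
  convert isPathConnected_range continuous_pair
  refine Subset.antisymm (fun p hp ↦ ⟨⟨p.1.1, p.1.1.2.1, hp.2⟩, ?_⟩) ?_
  · exact Subtype.ext (Prod.ext rfl (Subtype.ext hp.1.symm))
  · rintro _ ⟨w, rfl⟩
    exact ⟨rfl, w.2.2⟩

theorem isPathConnected_antipodalPairs_diamond : IsPathConnected (antipodalPairs diamond) :=
  isPathConnected_antipodalPairs isPathConnected_diamond fun _ hy ↦
    mem_cutPlane_and_neg_mem_cutPlane_iff.2 (.inl hy)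

theorem isPathConnected_antipodalPairs_upperCone : IsPathConnected (antipodalPairs upperCone) :=
  isPathConnected_antipodalPairs isPathConnected_upperCone fun _ hy ↦
    mem_cutPlane_and_neg_mem_cutPlane_iff.2 (.inr (.inl hy))

section Transition

variable {G : Type*} [Group G]

open scoped Classical in
/-- The cocycle that is `δ` on the component of antipodal pairs over `diamond` and `α` on the
component over `upperCone`. -/
noncomputable def transition (α δ : G) (z z' : cutQuadric) : G :=
  if z = z' then 1 else if z.1 1 ∈ upperCone then α else if -z.1 1 ∈ upperCone then α⁻¹ else δ

theorem transition_of_eq (α δ : G) {z z' : cutQuadric} (h : z = z') : transition α δ z z' = 1 :=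
  if_pos h

theorem map_transition {H : Type*} [Group H] (ψ : G →* H) (α δ : G) (z z' : cutQuadric) :
    ψ (transition α δ z z') = transition (ψ α) (ψ δ) z z' := by
  simp only [transition, apply_ite ψ, map_one, map_inv]

variable {p : Pullback cutProj cutProj}

theorem transition_of_mem_diamond (α δ : G) (hp : p ∈ antipodalPairs diamond) :
    transition α δ p.1.1 p.1.2 = δ := by
  have neg_mem : -p.1.1.1 1 ∈ diamond := by
    rw [← Set.mem_neg, neg_diamond]
    exact hp.2
  rw [transition, if_neg fun h ↦ (fst_eq_snd_iff p).1 h hp.1,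
    if_neg (disjoint_left.1 disjoint_diamond_upperCone hp.2),
    if_neg (disjoint_left.1 disjoint_diamond_upperCone neg_mem)]

theorem transition_of_mem_upperCone (α δ : G) (hp : p ∈ antipodalPairs upperCone) :
    transition α δ p.1.1 p.1.2 = α := by
  rw [transition, if_neg fun h ↦ (fst_eq_snd_iff p).1 h hp.1, if_pos hp.2]

theorem transition_of_mem_neg_upperCone (α δ : G) (hp : p ∈ antipodalPairs (-upperCone)) :
    transition α δ p.1.1 p.1.2 = α⁻¹ := by
  rw [transition, if_neg fun h ↦ (fst_eq_snd_iff p).1 h hp.1,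
    if_neg fun h ↦ neg_notMem_upperCone h hp.2, if_pos (Set.mem_neg.1 hp.2)]

theorem transition_swap_mul {α δ : G} (hδ : δ * δ = 1) (p : Pullback cutProj cutProj) :
    transition α δ p.1.2 p.1.1 * transition α δ p.1.1 p.1.2 = 1 := by
  by_cases hp : p.1.1 = p.1.2
  · rw [transition_of_eq _ _ hp, transition_of_eq _ _ hp.symm, mul_one]
  rcases mem_antipodalPairs_of_ne hp with hp | hp | hp
  · have swap := transition_of_mem_diamond α δ (neg_diamond ▸ swap_mem_antipodalPairs hp)
    rw [swap, transition_of_mem_diamond _ _ hp, hδ]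
  · have swap := transition_of_mem_neg_upperCone α δ (swap_mem_antipodalPairs hp)
    rw [swap, transition_of_mem_upperCone _ _ hp, inv_mul_cancel]
  · have swap := transition_of_mem_upperCone α δ (neg_neg upperCone ▸ swap_mem_antipodalPairs hp)
    rw [swap, transition_of_mem_neg_upperCone _ _ hp, mul_inv_cancel]

theorem isLocallyConstant_transition (α δ : G) :
    IsLocallyConstant fun p : Pullback cutProj cutProj ↦ transition α δ p.1.1 p.1.2 := by
  refine (IsLocallyConstant.iff_exists_open _).2 fun p ↦ ?_
  by_cases hp : p.1.1 = p.1.2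
  · exact ⟨_, isOpen_pullbackDiagonal_cutProj, hp, fun q hq ↦
      (transition_of_eq α δ hq).trans (transition_of_eq α δ hp).symm⟩
  rcases mem_antipodalPairs_of_ne hp with hp | hp | hp
  · exact ⟨_, isOpen_antipodalPairs isOpen_diamond, hp, fun q hq ↦
      (transition_of_mem_diamond α δ hq).trans (transition_of_mem_diamond α δ hp).symm⟩
  · exact ⟨_, isOpen_antipodalPairs isOpen_upperCone, hp, fun q hq ↦
      (transition_of_mem_upperCone α δ hq).trans (transition_of_mem_upperCone α δ hp).symm⟩
  · exact ⟨_, isOpen_antipodalPairs isOpen_upperCone.neg, hp, fun q hq ↦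
      (transition_of_mem_neg_upperCone α δ hq).trans (transition_of_mem_neg_upperCone α δ hp).symm⟩

/-- `transition` as a descent datum along `cutProj`. -/
noncomputable def transitionCocycle (α : G) {δ : G} (hδ : δ * δ = 1) :
    DescentCocycle cutProj G where
  toFun := transition α δ
  mul_eq {z z' z''} h h' := by
    rcases cutProj_eq_iff.1 h with rfl | antipodal
    · rw [transition_of_eq α δ rfl, mul_one]
    rcases cutProj_eq_iff.1 h' with rfl | antipodal'
    · rw [transition_of_eq α δ rfl, one_mul]
    obtain rfl : z = z'' := Subtype.ext (by rw [antipodal', antipodal, neg_neg])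
    rw [transition_of_eq α δ (rfl : z = z)]
    exact transition_swap_mul hδ ⟨(z, z'), h⟩
  isLocallyConstant := isLocallyConstant_transition α δ

theorem closure_transition_eq_top {α δ : G} (generate : Subgroup.closure {α, δ} = ⊤) :
    Subgroup.closure {g | ∃ z z', cutProj z = cutProj z' ∧ transition α δ z z' = g} = ⊤ := by
  refine eq_top_iff.2 (generate ▸ Subgroup.closure_mono ?_)
  rintro g (rfl | rfl)
  · obtain ⟨p, hp⟩ := isPathConnected_antipodalPairs_upperCone.nonempty
    exact ⟨_, _, p.2, transition_of_mem_upperCone _ _ hp⟩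
  · obtain ⟨p, hp⟩ := isPathConnected_antipodalPairs_diamond.nonempty
    exact ⟨_, _, p.2, transition_of_mem_diamond _ _ hp⟩

end Transition

theorem exists_gluingClass_eq_transition (z₀ : cutQuadric) :
    ∃ α δ : FundamentalGroup U (cutProj z₀), δ * δ = 1 ∧
      ∀ p, gluingClass cutProj z₀ p = transition α δ p.1.1 p.1.2 := by
  obtain ⟨α, hα⟩ := exists_gluingClass_eq cutProj z₀ isPathConnected_antipodalPairs_upperCone
  obtain ⟨δ, hδ⟩ := exists_gluingClass_eq cutProj z₀ isPathConnected_antipodalPairs_diamond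
  have swap_mul (p : Pullback cutProj cutProj) : gluingClass cutProj z₀ ⟨(p.1.2, p.1.1), p.2.symm⟩ *
      gluingClass cutProj z₀ p = 1 :=
    (gluingClass_mul cutProj z₀ p.2 p.2.symm).trans (gluingClass_diag cutProj z₀ _)
  refine ⟨α, δ, ?_, fun p ↦ ?_⟩
  · obtain ⟨p, hp⟩ := isPathConnected_antipodalPairs_diamond.nonempty
    have h := swap_mul p
    rwa [hδ p hp, hδ _ (neg_diamond ▸ swap_mem_antipodalPairs hp)] at h
  by_cases hp : p.1.1 = p.1.2
  · obtain ⟨⟨z, z'⟩, h⟩ := p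
    obtain rfl : z = z' := hp
    rw [transition_of_eq α δ rfl, gluingClass_diag]
  rcases mem_antipodalPairs_of_ne hp with hp | hp | hp
  · rw [transition_of_mem_diamond α δ hp, hδ p hp]
  · rw [transition_of_mem_upperCone α δ hp, hα p hp]
  · have h := swap_mul p
    rw [hα _ (neg_neg upperCone ▸ swap_mem_antipodalPairs hp)] at h
    rw [transition_of_mem_neg_upperCone α δ hp, eq_inv_of_mul_eq_one_right h]

theorem bijective_of_map_eq {G : Type*} [Group G] {z₀ : cutQuadric}
    {α δ : FundamentalGroup U (cutProj z₀)}
    (hαδ : ∀ p, gluingClass cutProj z₀ p = transition α δ p.1.1 p.1.2) {x y : G} (hy : y * y = 1)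
    (generate : Subgroup.closure {x, y} = ⊤) {ψ : G →* FundamentalGroup U (cutProj z₀)}
    (map_x : ψ x = α) (map_y : ψ y = δ) : Bijective ψ :=
  bijective_of_apply_eq_gluingClass (transitionCocycle x hy) isLocalHomeomorph_cutProj
    surjective_cutProj (closure_transition_eq_top generate) fun p ↦ by
      rw [hαδ, ← map_x, ← map_y]
      exact map_transition ψ x y _ _

theorem of_mul_of_mul_self :
    (PresentedGroup.of 0 * PresentedGroup.of 1) * (PresentedGroup.of 0 * PresentedGroup.of 1) =
      (1 : PresentedGroup rels) := by
  rw [← pow_two]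
  exact PresentedGroup.one_of_mem (rels := rels) (.inl rfl)

theorem closure_of_mul_of_eq_top : Subgroup.closure
    {PresentedGroup.of 0, PresentedGroup.of 0 * PresentedGroup.of 1} =
      (⊤ : Subgroup (PresentedGroup rels)) := by
  rw [eq_top_iff, ← PresentedGroup.closure_range_of, Subgroup.closure_le]
  have zero_mem := Subgroup.subset_closure (mem_insert (PresentedGroup.of (rels := rels) 0)
    {PresentedGroup.of 0 * PresentedGroup.of 1})
  have mul_mem := Subgroup.subset_closure (mem_insert_of_mem (PresentedGroup.of (rels := rels) 0)
    (mem_singleton (PresentedGroup.of 0 * PresentedGroup.of 1)))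
  rintro _ ⟨i, rfl⟩
  fin_cases i
  · exact zero_mem
  · exact (Subgroup.mul_mem_cancel_left _ zero_mem).1 mul_mem

theorem lift_eq_one_of_mem_rels {G : Type*} [Group G] (x : G) {y : G} (hy : y * y = 1) :
    ∀ r ∈ rels, FreeGroup.lift ![x, x⁻¹ * y] r = 1 := by
  rintro r (rfl | rfl)
  · simp [pow_two, hy]
  · simp only [map_mul, FreeGroup.lift_apply_of, Matrix.cons_val_zero,
      Matrix.cons_val_one, pow_two]
    calc x⁻¹ * y * x * (x⁻¹ * y * x) = x⁻¹ * (y * y) * x := by group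
      _ = 1 := by rw [hy, mul_one, inv_mul_cancel]

end TangentConics

open TangentConics

theorem pi1_two_tangent_conics (u : U) :
    Nonempty (FundamentalGroup U u ≃* PresentedGroup rels) := by
  obtain ⟨z₀, rfl⟩ := surjective_cutProj u
  obtain ⟨α, δ, δ_mul_self, hαδ⟩ := exists_gluingClass_eq_transition z₀
  let ψ : PresentedGroup rels →* FundamentalGroup U (cutProj z₀) :=
    PresentedGroup.toGroup (lift_eq_one_of_mem_rels α δ_mul_self)
  have map_a : ψ (.of 0) = α := PresentedGroup.toGroup.of _
  have map_b : ψ (.of 1) = α⁻¹ * δ := PresentedGroup.toGroup.of _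
  have map_ab : ψ (.of 0 * .of 1) = δ := by rw [map_mul, map_a, map_b, mul_inv_cancel_left]
  have bijective : Bijective ψ :=
    bijective_of_map_eq hαδ of_mul_of_mul_self closure_of_mul_of_eq_top map_a map_ab
  exact ⟨(MulEquiv.ofBijective ψ bijective).symm⟩
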